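/- arXiv:2605.26188 — 2 statements merged into one kernel-verified Lean document; each statement's English description precedes it below -/
import Mathlib

section
/- For every ε > 0 there exists N such that for all n ≥ N and every integer a coprime to F_n, min_{x ∈ ℤ, 1 ≤ x < F_n} ‖a·x/F_n‖ · ‖F_{n−1}·a·x/F_n‖ ≥ 1/( F_n · ((3+√5)/2 + ε) ). -/
/-- The distance from a real number to the nearest integer. -/
noncomputable def distNearestInt (t : ℝ) : ℝ := |t - round t|

/-!
For `y = a x`, the product of the two distances, times `F_n ^ 2`, is `|u| |F_{n-1} u - w F_n|` for
some integers `u`, `w` with `0 < |u| < F_n`, and we bound this below by `F_{n-2}`.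
The vectors `(F_k, F_{k-1})` and `(F_{k+1}, F_k)` form a basis of `ℤ²`, and the sign in
`F_{n-1} F_k - F_{k-1} F_n = ± F_{n-k}` alternates with `k`. If `F_k ≤ |u| < F_{k+1}`, then the
contributions of the two basis vectors to `u` cannot have the same sign, so their contributions to
`F_{n-1} u - w F_n` cannot cancel, which gives `|F_{n-1} u - w F_n| ≥ F_{n-k}`. It remains to use
`F_{n-2} ≤ F_k F_{n-k}` and `F_n / F_{n-2} → φ² = (3 + √5) / 2`.
-/

open Filter Topology
open Nat (fib)

theorem fib_succ_mul_fib_add_sub (k i : ℕ) :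
    (fib (k + 1) * fib (k + i) - fib k * fib (k + i + 1) : ℤ) = (-1) ^ k * fib i := by
  induction k with
  | zero => simp
  | succ k ih =>
    rw [Nat.add_right_comm k 1 i, Nat.fib_add_two, Nat.fib_add_two]
    push_cast
    linear_combination -ih

theorem fib_add_le_fib_succ_mul_fib_succ (k j : ℕ) :
    fib (k + j) ≤ fib (k + 1) * fib (j + 1) := by
  cases k with
  | zero => simpa using Nat.fib_le_fib_succ
  | succ k =>
    calc fib (k + 1 + j) = fib k * fib j + fib (k + 1) * fib (j + 1) := by
          rw [Nat.add_right_comm, Nat.fib_add]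
      _ ≤ fib k * fib (j + 1) + fib (k + 1) * fib (j + 1) := by
          gcongr
          exact Nat.le_succ j
      _ = fib (k + 1 + 1) * fib (j + 1) := by rw [Nat.fib_add_two, add_mul]

theorem exists_eq_mul_fib_add_mul_fib (u w : ℤ) (k : ℕ) :
    ∃ a b : ℤ, u = a * fib (k + 1) + b * fib (k + 2) ∧ w = a * fib k + b * fib (k + 1) := by
  induction k with
  | zero => exact ⟨u - w, w, by simp, by simp⟩
  | succ k ih =>
    obtain ⟨a, b, hu, hw⟩ := ih
    refine ⟨b - a, a, ?_, ?_⟩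
    · rw [hu, Nat.fib_add_two (n := k + 1)]
      push_cast
      ring
    · rw [hw, Nat.fib_add_two]
      push_cast
      ring

theorem le_abs_mul_sub_mul_of_abs_mul_add_mul_lt {a b p q r s : ℤ} (hp : 0 ≤ p) (hr : 0 ≤ r)
    (hs : 0 ≤ s) (hne : a * p + b * q ≠ 0) (hlt : |a * p + b * q| < q) :
    r ≤ |a * r - b * s| := by
  have hq : 0 < q := (abs_nonneg _).trans_lt hlt
  obtain ⟨hlt_neg, hlt_pos⟩ := abs_lt.mp hlt
  rcases lt_trichotomy b 0 with hb | rfl | hb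
  · have ha : 0 < a := by
      by_contra! ha
      have hap : a * p ≤ 0 := mul_nonpos_of_nonpos_of_nonneg ha hp
      have hbq : b * q ≤ -1 * q := by gcongr; omega
      linarith
    calc r ≤ a * r := le_mul_of_one_le_left hr ha
      _ ≤ a * r - b * s := (le_sub_self_iff _).mpr (mul_nonpos_of_nonpos_of_nonneg hb.le hs)
      _ ≤ |a * r - b * s| := le_abs_self _
  · have ha : a ≠ 0 := by
      rintro rfl
      simp at hne
    rw [zero_mul, sub_zero, abs_mul, abs_of_nonneg hr]
    exact le_mul_of_one_le_left hr (Int.one_le_abs ha)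
  · have ha : a < 0 := by
      by_contra! ha
      have hap : 0 ≤ a * p := mul_nonneg ha hp
      have hbq : q ≤ b * q := le_mul_of_one_le_left hq.le hb
      linarith
    calc r ≤ -a * r := le_mul_of_one_le_left hr (by omega)
      _ ≤ -a * r + b * s := le_add_of_nonneg_right (mul_nonneg hb.le hs)
      _ = -(a * r - b * s) := by ring
      _ ≤ |a * r - b * s| := neg_le_abs _

theorem fib_succ_le_abs_fib_mul_sub_mul_fib (k j : ℕ) {u : ℤ} (w : ℤ) (hu0 : u ≠ 0)
    (hu : |u| < fib (k + 2)) :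
    (fib (j + 1) : ℤ) ≤ |fib (k + j + 1) * u - w * fib (k + j + 2)| := by
  obtain ⟨a, b, rfl, rfl⟩ := exists_eq_mul_fib_add_mul_fib u w k
  have coordinates : fib (k + j + 1) * (a * fib (k + 1) + b * fib (k + 2)) -
      (a * fib k + b * fib (k + 1)) * fib (k + j + 2) =
        (-1) ^ k * (a * fib (j + 1) - b * fib j : ℤ) := by
    have h₁ := fib_succ_mul_fib_add_sub k (j + 1)
    have h₂ := fib_succ_mul_fib_add_sub (k + 1) j
    rw [Nat.add_right_comm k 1 j] at h₂
    linear_combination a * h₁ + b * h₂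
  rw [coordinates, abs_mul, abs_neg_one_pow, one_mul]
  exact le_abs_mul_sub_mul_of_abs_mul_add_mul_lt (by positivity) (by positivity) (by positivity)
    hu0 hu

theorem exists_fib_succ_le_and_lt_fib_add_two {m : ℕ} (hm : 0 < m) :
    ∃ k, fib (k + 1) ≤ m ∧ m < fib (k + 2) := by
  obtain ⟨k, hk⟩ := Nat.exists_eq_add_one.mpr (Nat.greatestFib_pos.mpr hm)
  exact ⟨k, Nat.le_greatestFib.mp hk.ge, Nat.greatestFib_lt.mp (hk.trans_lt (Nat.lt_add_one _))⟩

theorem fib_le_abs_mul_abs_fib_mul_sub_mul_fib (n : ℕ) {u : ℤ} (w : ℤ) (hu0 : u ≠ 0)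
    (hu : |u| < fib (n + 2)) :
    (fib n : ℤ) ≤ |u| * |fib (n + 1) * u - w * fib (n + 2)| := by
  obtain ⟨k, hk_le, hk_lt⟩ := exists_fib_succ_le_and_lt_fib_add_two (Int.natAbs_pos.mpr hu0)
  zify at hk_le hk_lt
  obtain ⟨j, rfl⟩ : ∃ j, n = k + j := by
    refine Nat.exists_eq_add_of_le (Nat.le_of_not_lt fun hnk ↦ ?_)
    have : fib (n + 2) ≤ fib (k + 1) := Nat.fib_mono (by omega)
    omega
  calc (fib (k + j) : ℤ) ≤ fib (k + 1) * fib (j + 1) := by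
        exact_mod_cast fib_add_le_fib_succ_mul_fib_succ k j
    _ ≤ |u| * |fib (k + j + 1) * u - w * fib (k + j + 2)| := by
        gcongr
        exact fib_succ_le_abs_fib_mul_sub_mul_fib k j w hu0 hk_lt

theorem exists_distNearestInt_div_eq {m : ℕ} (hm : 0 < m) (y : ℤ) :
    ∃ r : ℤ, |y - r * m| < m ∧ distNearestInt (y / m) = (|y - r * m| : ℤ) / m := by
  have hm' : (0 : ℝ) < m := Nat.cast_pos.mpr hm
  set r := round (y / m : ℝ)
  have dist_eq : distNearestInt (y / m) = (|y - r * m| : ℤ) / m := by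
    calc |(y / m : ℝ) - r| = |((y - r * m) / m : ℝ)| := by
          rw [sub_div, mul_div_cancel_right₀ _ hm'.ne']
      _ = (|y - r * m| : ℤ) / m := by
          push_cast
          rw [abs_div, Nat.abs_cast]
  refine ⟨r, ?_, dist_eq⟩
  have dist_lt_one : distNearestInt (y / m) < 1 :=
    (abs_sub_round _).trans_lt one_half_lt_one
  rw [dist_eq, div_lt_one hm'] at dist_lt_one
  exact_mod_cast dist_lt_one

theorem fib_div_sq_le_distNearestInt_mul_distNearestInt (n : ℕ) {y : ℤ}
    (hy : ¬ (fib (n + 2) : ℤ) ∣ y) :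
    (fib n / fib (n + 2) ^ 2 : ℝ) ≤
      distNearestInt (y / fib (n + 2)) * distNearestInt (fib (n + 1) * y / fib (n + 2)) := by
  have fib_pos : 0 < fib (n + 2) := Nat.fib_pos.mpr (by omega)
  obtain ⟨r, hr_lt, hr⟩ := exists_distNearestInt_div_eq fib_pos y
  obtain ⟨q, -, hq⟩ := exists_distNearestInt_div_eq fib_pos (fib (n + 1) * y)
  have residue_ne_zero : y - r * fib (n + 2) ≠ 0 := fun h ↦
    hy (Dvd.intro_left r (sub_eq_zero.mp h).symm)
  have bound := fib_le_abs_mul_abs_fib_mul_sub_mul_fib n (q - fib (n + 1) * r)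
    residue_ne_zero hr_lt
  rw [show fib (n + 1) * (y - r * fib (n + 2)) - (q - fib (n + 1) * r) * fib (n + 2) =
    fib (n + 1) * y - q * fib (n + 2) by ring] at bound
  push_cast at hq
  rw [hr, hq, div_mul_div_comm, ← sq]
  gcongr
  exact_mod_cast bound

theorem tendsto_fib_add_two_div_fib_atTop :
    Tendsto (fun n ↦ (fib (n + 2) / fib n : ℝ)) atTop (𝓝 (Real.goldenRatio ^ 2)) := by
  rw [sq]
  refine ((tendsto_fib_succ_div_fib_atTop.comp (tendsto_add_atTop_nat 1)).mul
    tendsto_fib_succ_div_fib_atTop).congr fun n ↦ ?_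
  exact div_mul_div_cancel₀ (by simp)

theorem eventually_fib_add_two_le_fib_mul {c : ℝ} (hc : Real.goldenRatio ^ 2 < c) :
    ∀ᶠ n in atTop, (fib (n + 2) : ℝ) ≤ fib n * c := by
  filter_upwards [tendsto_fib_add_two_div_fib_atTop.eventually_le_const hc,
    eventually_gt_atTop 0] with n hn hn_pos
  rwa [div_le_iff₀' (by simpa using hn_pos)] at hn

theorem not_dvd_mul_of_gcd_eq_one {a x : ℤ} {m : ℕ} (ha : Int.gcd a m = 1) (hx_pos : 0 < x)
    (hx_lt : x < m) : ¬ (m : ℤ) ∣ a * x := fun h ↦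
  (Int.le_of_dvd hx_pos
    (Int.dvd_of_dvd_mul_right_of_gcd_one h (Int.gcd_comm a m ▸ ha))).not_gt hx_lt

/-- For every ε > 0 and all large `n`, for every integer `a` coprime to `F_n`,
`min_{1 ≤ x < F_n} ‖ax/F_n‖ · ‖F_{n-1} a x / F_n‖ ≥ 1/(F_n ((3+√5)/2 + ε))`. -/
theorem stmt_7 (ε : ℝ) (hε : 0 < ε) :
    ∃ N : ℕ, ∀ n : ℕ, N ≤ n → ∀ a : ℤ, Int.gcd a (Nat.fib n) = 1 →
      ∀ x : ℤ, 1 ≤ x → x < (Nat.fib n : ℤ) →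
        distNearestInt ((a : ℝ) * (x : ℝ) / (Nat.fib n : ℝ)) *
            distNearestInt ((Nat.fib (n - 1) : ℝ) * (a : ℝ) * (x : ℝ) / (Nat.fib n : ℝ)) ≥
          1 / ((Nat.fib n : ℝ) * ((3 + Real.sqrt 5) / 2 + ε)) := by
  have goldenRatio_sq_eq : Real.goldenRatio ^ 2 = (3 + Real.sqrt 5) / 2 := by
    rw [Real.goldenRatio_sq, Real.goldenRatio]
    ring
  obtain ⟨N, hN⟩ := eventually_atTop.mp
    (eventually_fib_add_two_le_fib_mul (goldenRatio_sq_eq.trans_lt (lt_add_of_pos_right _ hε)))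
  refine ⟨N + 2, fun n hn a ha x hx_pos hx_lt ↦ ?_⟩
  obtain ⟨m, rfl⟩ := Nat.exists_eq_add_of_le' (le_of_add_le_right hn)
  have product_bound := fib_div_sq_le_distNearestInt_mul_distNearestInt m
    (not_dvd_mul_of_gcd_eq_one ha hx_pos hx_lt)
  push_cast at product_bound
  rw [← mul_assoc] at product_bound
  refine le_trans ?_ product_bound
  have fib_pos : (0 : ℝ) < fib (m + 2) := by simp
  rw [div_le_div_iff₀ (by positivity) (by positivity), one_mul, sq, mul_left_comm]
  gcongr
  exact hN m (by omega)
end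

section
/- Let α, β be real numbers for which there exist a sequence of positive reals δ_ν → 0, a strictly increasing sequence of positive integers (n_ν), and integers (a_ν) with 1 ≤ a_ν < F_{n_ν}, gcd(a_ν, F_{n_ν}) = 1, such that |α − a_ν/F_{n_ν}| ≤ δ_ν/F_{n_ν}² and |β − {F_{n_ν−1}·a_ν/F_{n_ν}}| ≤ δ_ν/F_{n_ν}² for all ν. Then limsup_{Q→∞} Q · ( min_{x ∈ ℤ, 1 ≤ x < Q} ‖αx‖ · ‖βx‖ ) ≥ 2/(3+√5). -/
/-!
Write `F = fib n` and consider the integer pairs `(u, v)` with `v ≡ fib (n - 1) * u` modulo `F` and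
`F ∤ u`, so that `F ∤ v`. The convergents of `fib (n - 1) / F` are ratios of consecutive Fibonacci
numbers, and `0 < |u| < fib (m + 1)` forces `|v| ≥ fib (n - m)`. If `|u| < F`, choosing `m ≥ 2` with
`fib m ≤ |u| < fib (m + 1)` gives `|u * v| ≥ fib m * fib (n - m) ≥ fib (n - 2)`; if `|u| ≥ F`, the
same bound follows from `v ≠ 0`.
For `0 < x < F`, the numbers `u = a * x - F * round (α * x)` and
`v = b * x - F * round (β * x)`, where `b ≡ fib (n - 1) * a`, form such a pair, and
`‖α * x‖`, `‖β * x‖` are at least `(1 - δ) * |u| / F`, `(1 - δ) * |v| / F`. Hence, at `Q = F`,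
the quantity in the limsup is at least `(1 - δ)² * fib (n - 2) / fib n`, which tends to
`ψ² = 2 / (3 + √5)`.
-/

open Filter Topology

section FibonacciLattice

lemma exists_fib_coordinates (k : ℕ) (y t : ℤ) :
    ∃ c d : ℤ, y = c * Nat.fib k + d * Nat.fib (k + 1) ∧
      ∀ j : ℕ, t * Nat.fib (k + j + 1) - y * Nat.fib (k + j) =
        (-1) ^ k * (c * Nat.fib (j + 1) - d * Nat.fib j) := by
  induction k with
  | zero => exact ⟨t, y, by simp, by simp⟩
  | succ k ih =>
    obtain ⟨c, d, hy, ht⟩ := ih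
    refine ⟨d - c, c, ?_, fun j => ?_⟩
    · rw [hy, Nat.fib_add_two]
      push_cast
      ring
    · rw [show k + 1 + j = k + (j + 1) by ring, ht, Nat.fib_add_two]
      push_cast
      ring

lemma le_abs_mul_sub_mul_of_mul_nonpos {c d p q : ℤ} (hc : c ≠ 0) (hcd : c * d ≤ 0)
    (hp : 0 ≤ p) (hq : 0 ≤ q) : p ≤ |c * p - d * q| := by
  rcases hc.lt_or_gt with hc | hc
  · have hd : 0 ≤ d := nonneg_of_mul_nonpos_right hcd hc
    rw [abs_sub_comm]
    exact le_trans (by nlinarith [mul_nonneg hd hq]) (le_abs_self _)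
  · have hd : d ≤ 0 := nonpos_of_mul_nonpos_right hcd hc
    exact le_trans (by nlinarith [mul_nonneg (neg_nonneg.mpr hd) hq]) (le_abs_self _)

lemma fib_succ_le_abs_mul_fib_sub_mul_fib {k : ℕ} {y : ℤ} (hy0 : 0 < y)
    (hy : y < Nat.fib (k + 1)) (t : ℤ) (j : ℕ) :
    (Nat.fib (j + 1) : ℤ) ≤ |t * Nat.fib (k + j + 1) - y * Nat.fib (k + j)| := by
  obtain ⟨c, d, hycd, ht⟩ := exists_fib_coordinates k y t
  rw [ht, abs_mul, abs_neg_one_pow, one_mul]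
  refine le_abs_mul_sub_mul_of_mul_nonpos ?_ ?_ (by positivity) (by positivity)
  · rintro rfl
    rcases lt_or_ge 0 d with hd | hd <;> nlinarith
  · by_contra! hcd
    rcases pos_and_pos_or_neg_and_neg_of_mul_pos hcd with ⟨hc, hd⟩ | ⟨hc, hd⟩ <;> nlinarith

lemma fib_add_add_one_le_mul (p q : ℕ) :
    Nat.fib (p + q + 1) ≤ Nat.fib (p + 2) * Nat.fib (q + 1) := by
  rw [Nat.fib_add, Nat.fib_add_two, add_mul]
  gcongr
  exact q.le_succ

lemma fib_le_mul_abs_mul_fib_sub_mul_fib {n y : ℕ} (hy0 : 0 < y) (hy : y < Nat.fib (n + 2))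
    (t : ℤ) :
    (Nat.fib n : ℤ) ≤ y * |t * Nat.fib (n + 2) - y * Nat.fib (n + 1)| := by
  obtain ⟨p, hp⟩ : ∃ p, Nat.greatestFib y = p + 2 :=
    Nat.exists_eq_add_of_le' (Nat.le_greatestFib.mpr hy0)
  have hpn : p + 2 < n + 2 := hp ▸ Nat.greatestFib_lt.mpr hy
  obtain ⟨j, rfl⟩ : ∃ j, n = p + j + 1 := Nat.exists_eq_add_of_lt (by lia)
  have hy_ge : Nat.fib (p + 2) ≤ y := hp ▸ Nat.fib_greatestFib_le y
  have hy_lt : y < Nat.fib (p + 2 + 1) := hp ▸ Nat.lt_fib_greatestFib_add_one y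
  have hdist := fib_succ_le_abs_mul_fib_sub_mul_fib (Int.natCast_pos.mpr hy0)
    (Int.ofNat_lt.mpr hy_lt) t j
  calc (Nat.fib (p + j + 1) : ℤ) ≤ Nat.fib (p + 2) * Nat.fib (j + 1) := by
        exact_mod_cast fib_add_add_one_le_mul p j
    _ ≤ y * |t * Nat.fib (p + 2 + j + 1) - y * Nat.fib (p + 2 + j)| := by gcongr
    _ = _ := by rw [show p + 2 + j = p + j + 1 + 1 by ring]

lemma not_fib_dvd_of_modEq {n : ℕ} {u v : ℤ}
    (huv : v ≡ Nat.fib (n + 1) * u [ZMOD Nat.fib (n + 2)]) (hu : ¬(Nat.fib (n + 2) : ℤ) ∣ u) :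
    ¬(Nat.fib (n + 2) : ℤ) ∣ v := by
  have hcoprime : IsCoprime (Nat.fib (n + 2) : ℤ) (Nat.fib (n + 1)) :=
    Nat.isCoprime_iff_coprime.mpr (Nat.fib_coprime_fib_succ (n + 1)).symm
  exact fun hv => hu (hcoprime.dvd_of_dvd_mul_left ((huv.dvd_iff).mp hv))

lemma fib_le_abs_mul_abs_of_modEq {n : ℕ} {u v : ℤ}
    (huv : v ≡ Nat.fib (n + 1) * u [ZMOD Nat.fib (n + 2)]) (hu : ¬(Nat.fib (n + 2) : ℤ) ∣ u) :
    (Nat.fib n : ℤ) ≤ |u| * |v| := by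
  wlog hu0 : 0 ≤ u generalizing u v
  · have := this (u := -u) (v := -v) (by simpa using huv.neg) (by simpa using hu) (by lia)
    simpa only [abs_neg] using this
  lift u to ℕ using hu0
  rcases lt_or_ge u (Nat.fib (n + 2)) with hlt | hge
  · obtain ⟨t, ht⟩ := huv.dvd
    have hv : v = -(t * Nat.fib (n + 2) - u * Nat.fib (n + 1)) := by linarith
    have hu_pos : 0 < u := Nat.pos_of_ne_zero (by rintro rfl; simp at hu)
    rw [hv, abs_neg, Nat.abs_cast]
    exact fib_le_mul_abs_mul_fib_sub_mul_fib hu_pos hlt t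
  · have hv : v ≠ 0 := fun hv => not_fib_dvd_of_modEq huv hu (hv ▸ dvd_zero _)
    have hfib : Nat.fib n ≤ u := (Nat.fib_mono (by lia)).trans hge
    calc (Nat.fib n : ℤ) ≤ |(u : ℤ)| := by rw [Nat.abs_cast]; exact_mod_cast hfib
      _ ≤ |(u : ℤ)| * |v| := le_mul_of_one_le_right (abs_nonneg _) (Int.one_le_abs hv)

end FibonacciLattice

section DistNearestInt

lemma distNearestInt_nonneg (t : ℝ) : 0 ≤ distNearestInt t := abs_nonneg _

lemma distNearestInt_le_one (t : ℝ) : distNearestInt t ≤ 1 :=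
  (abs_sub_round t).trans (by norm_num)

lemma exists_modEq_mul_abs_div_le_distNearestInt {θ δ : ℝ} {N x : ℕ} {b : ℤ} (hx : x ≤ N)
    (hθ : |θ - b / N| ≤ δ / (N : ℝ) ^ 2) (hbx : ¬(N : ℤ) ∣ b * x) :
    ∃ u : ℤ, u ≡ b * x [ZMOD N] ∧ (1 - δ) * (|(u : ℝ)| / N) ≤ distNearestInt (θ * x) := by
  have hN : (0 : ℝ) < N := by
    refine Nat.cast_pos.mpr (Nat.pos_of_ne_zero ?_)
    rintro rfl
    simp [Nat.le_zero.mp hx] at hbx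
  have hδ : 0 ≤ δ := by
    have := (abs_nonneg _).trans hθ
    rwa [le_div_iff₀ (by positivity), zero_mul] at this
  set m := round (θ * x)
  set u : ℤ := b * x - N * m with hu
  have hu_modEq : u ≡ b * x [ZMOD N] := by simp [hu, Int.modEq_iff_dvd]
  have hu_one_le : (1 : ℝ) ≤ |(u : ℝ)| := by
    refine mod_cast Int.one_le_abs fun h => hbx ?_
    simpa [h] using (hu_modEq.dvd_iff).mp (h ▸ dvd_zero _)
  have hu_div : (u : ℝ) / N = (θ * x - m) - (θ - b / N) * x := by
    rw [hu]
    push_cast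
    field_simp
    ring
  have herror : |θ - b / N| * x ≤ δ * (|(u : ℝ)| / N) := by
    calc |θ - b / N| * x ≤ δ / (N : ℝ) ^ 2 * N := by gcongr
      _ = δ * (1 / N) := by field_simp
      _ ≤ δ * (|(u : ℝ)| / N) := by gcongr
  have htriangle : |(u : ℝ)| / N ≤ distNearestInt (θ * x) + |θ - b / N| * x := by
    calc |(u : ℝ)| / N = |(θ * x - m) - (θ - b / N) * x| := by
          rw [← hu_div, abs_div, Nat.abs_cast]
      _ ≤ |θ * x - m| + |(θ - b / N) * x| := abs_sub _ _
      _ = distNearestInt (θ * x) + |θ - b / N| * x := by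
          rw [abs_mul, Nat.abs_cast, distNearestInt]
  exact ⟨u, hu_modEq, by linarith⟩

lemma fib_div_sq_le_distNearestInt_mul {α β δ : ℝ} {n x : ℕ} {a b : ℤ} (hδ : δ ≤ 1)
    (ha : IsCoprime a (Nat.fib (n + 2)))
    (hb : b ≡ Nat.fib (n + 1) * a [ZMOD Nat.fib (n + 2)])
    (hα : |α - a / Nat.fib (n + 2)| ≤ δ / (Nat.fib (n + 2) : ℝ) ^ 2)
    (hβ : |β - b / Nat.fib (n + 2)| ≤ δ / (Nat.fib (n + 2) : ℝ) ^ 2)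
    (hx0 : 0 < x) (hx : x < Nat.fib (n + 2)) :
    (1 - δ) ^ 2 * (Nat.fib n / (Nat.fib (n + 2) : ℝ) ^ 2) ≤
      distNearestInt (α * x) * distNearestInt (β * x) := by
  have hax : ¬(Nat.fib (n + 2) : ℤ) ∣ a * x := fun h =>
    Nat.not_dvd_of_pos_of_lt hx0 hx (Int.natCast_dvd_natCast.mp (ha.symm.dvd_of_dvd_mul_left h))
  have habx : b * x ≡ Nat.fib (n + 1) * (a * x) [ZMOD Nat.fib (n + 2)] := by
    simpa only [mul_assoc] using hb.mul_right x
  obtain ⟨u, hu, hu_le⟩ := exists_modEq_mul_abs_div_le_distNearestInt hx.le hα hax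
  obtain ⟨v, hv, hv_le⟩ := exists_modEq_mul_abs_div_le_distNearestInt hx.le hβ
    (not_fib_dvd_of_modEq habx hax)
  have huv : v ≡ Nat.fib (n + 1) * u [ZMOD Nat.fib (n + 2)] :=
    (hv.trans habx).trans (hu.symm.mul_left _)
  have hfib : (Nat.fib n : ℝ) ≤ |(u : ℝ)| * |(v : ℝ)| := by
    exact_mod_cast fib_le_abs_mul_abs_of_modEq huv (mt (hu.dvd_iff).mp hax)
  have hδ' : 0 ≤ 1 - δ := sub_nonneg.mpr hδ
  calc (1 - δ) ^ 2 * (Nat.fib n / (Nat.fib (n + 2) : ℝ) ^ 2)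
      ≤ (1 - δ) ^ 2 * (|(u : ℝ)| * |(v : ℝ)| / (Nat.fib (n + 2) : ℝ) ^ 2) := by gcongr
    _ = (1 - δ) * (|(u : ℝ)| / Nat.fib (n + 2)) * ((1 - δ) * (|(v : ℝ)| / Nat.fib (n + 2))) := by
        ring
    _ ≤ distNearestInt (α * x) * distNearestInt (β * x) :=
        mul_le_mul hu_le hv_le (mul_nonneg hδ' (by positivity)) (distNearestInt_nonneg _)

end DistNearestInt

section MinDistProd

/-- The minimum of `‖α * x‖ * ‖β * x‖` over the integers `1 ≤ x < Q`, the quantity whose decay in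
`Q` is measured in Littlewood's problem. It takes the junk value `0` when `Q ≤ 1`. -/
noncomputable def minDistProd (α β : ℝ) (Q : ℕ) : ℝ :=
  sInf {y : ℝ | ∃ x : ℕ, 1 ≤ x ∧ x < Q ∧ y = distNearestInt (α * x) * distNearestInt (β * x)}

lemma minDistProd_le (α β : ℝ) {Q x : ℕ} (hx0 : 0 < x) (hx : x < Q) :
    minDistProd α β Q ≤ distNearestInt (α * x) * distNearestInt (β * x) := by
  refine csInf_le ⟨0, ?_⟩ ⟨x, hx0, hx, rfl⟩
  rintro _ ⟨z, -, -, rfl⟩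
  exact mul_nonneg (distNearestInt_nonneg _) (distNearestInt_nonneg _)

lemma le_minDistProd {α β c : ℝ} {Q : ℕ} (hQ : 1 < Q)
    (h : ∀ x : ℕ, 0 < x → x < Q → c ≤ distNearestInt (α * x) * distNearestInt (β * x)) :
    c ≤ minDistProd α β Q := by
  refine le_csInf ⟨_, 1, le_rfl, hQ, rfl⟩ ?_
  rintro _ ⟨x, hx0, hx, rfl⟩
  exact h x hx0 hx

lemma mul_minDistProd_le_one (α β : ℝ) (Q : ℕ) : Q * minDistProd α β Q ≤ 1 := by
  rcases Nat.lt_or_ge 1 Q with hQ | hQ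
  · obtain ⟨x, hx0, hx, hdirichlet⟩ :=
      Real.exists_nat_abs_mul_sub_round_le α (n := Q - 1) (by lia)
    have hαx : distNearestInt (α * x) ≤ 1 / Q := by
      rwa [← Nat.cast_add_one, Nat.sub_add_cancel hQ.le, mul_comm (x : ℝ)] at hdirichlet
    have hQ0 : (Q : ℝ) ≠ 0 := by positivity
    calc Q * minDistProd α β Q
        ≤ Q * (distNearestInt (α * x) * distNearestInt (β * x)) := by
          gcongr
          exact minDistProd_le α β hx0 (by lia)
      _ ≤ Q * (1 / Q * 1) := by
          gcongr
          · exact distNearestInt_nonneg _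
          · exact distNearestInt_le_one _
      _ = 1 := by field_simp
  · have hempty : {y : ℝ | ∃ x : ℕ, 1 ≤ x ∧ x < Q ∧
        y = distNearestInt (α * x) * distNearestInt (β * x)} = ∅ :=
      Set.eq_empty_iff_forall_notMem.mpr fun _ ⟨_, hx0, hx, _⟩ => by lia
    simp [minDistProd, hempty]

lemma fib_div_fib_le_fib_mul_minDistProd {α β δ : ℝ} {n : ℕ} {a b : ℤ} (hn : 3 ≤ n) (hδ : δ ≤ 1)
    (ha : IsCoprime a (Nat.fib n)) (hb : b ≡ Nat.fib (n - 1) * a [ZMOD Nat.fib n])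
    (hα : |α - a / Nat.fib n| ≤ δ / (Nat.fib n : ℝ) ^ 2)
    (hβ : |β - b / Nat.fib n| ≤ δ / (Nat.fib n : ℝ) ^ 2) :
    (1 - δ) ^ 2 * (Nat.fib (n - 2) / Nat.fib n) ≤ Nat.fib n * minDistProd α β (Nat.fib n) := by
  obtain ⟨k, rfl⟩ : ∃ k, n = k + 2 := Nat.exists_eq_add_of_le' (by lia)
  have hfib : 1 < Nat.fib (k + 2) :=
    (Nat.fib_strictMonoOn.lt_iff_lt (by simp) (by simp)).mpr (by lia : 2 < k + 2)
  have hfib0 : (Nat.fib (k + 2) : ℝ) ≠ 0 := by positivity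
  calc (1 - δ) ^ 2 * (Nat.fib k / Nat.fib (k + 2) : ℝ)
      = Nat.fib (k + 2) * ((1 - δ) ^ 2 * (Nat.fib k / (Nat.fib (k + 2) : ℝ) ^ 2)) := by
        field_simp
    _ ≤ Nat.fib (k + 2) * minDistProd α β (Nat.fib (k + 2)) := by
        gcongr
        exact le_minDistProd hfib fun x => fib_div_sq_le_distNearestInt_mul hδ ha hb hα hβ

end MinDistProd

section Limits

lemma tendsto_fib_atTop : Tendsto Nat.fib atTop atTop :=
  (tendsto_add_atTop_iff_nat 2).mp Nat.fib_add_two_strictMono.tendsto_atTop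

lemma tendsto_fib_sub_two_div_fib_atTop :
    Tendsto (fun n : ℕ => (Nat.fib (n - 2) / Nat.fib n : ℝ)) atTop (𝓝 (Real.goldenConj ^ 2)) := by
  rw [← tendsto_add_atTop_iff_nat 2, ← neg_sq, sq]
  refine (tendsto_fib_div_fib_succ_atTop.mul
    (tendsto_fib_div_fib_succ_atTop.comp (tendsto_add_atTop_nat 1))).congr fun n => ?_
  have hfib : (Nat.fib (n + 1) : ℝ) ≠ 0 := mod_cast (Nat.fib_pos.mpr n.succ_pos).ne'
  exact div_mul_div_cancel₀ hfib

lemma goldenConj_sq_eq_two_div : Real.goldenConj ^ 2 = 2 / (3 + √5) := by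
  have h5 : √5 ^ 2 = 5 := Real.sq_sqrt (by norm_num)
  rw [Real.goldenConj_sq, Real.goldenConj]
  field_simp
  linarith

lemma le_limsup_of_tendsto_of_eventually_le_comp {ι κ R : Type*}
    [ConditionallyCompleteLinearOrder R] [TopologicalSpace R] [OrderTopology R]
    {l : Filter ι} [l.NeBot] {l' : Filter κ} {f : ι → R} {g : κ → R} {s : ι → κ} {L : R}
    (hg : l'.IsBoundedUnder (· ≤ ·) g) (hs : Tendsto s l l') (hf : Tendsto f l (𝓝 L))
    (hfg : ∀ᶠ i in l, f i ≤ g (s i)) : L ≤ limsup g l' := by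
  have hgs : l.IsBoundedUnder (· ≤ ·) (g ∘ s) := hs.isBoundedUnder_comp hg
  have hcobdd : l.IsCoboundedUnder (· ≤ ·) (g ∘ s) :=
    (hf.isBoundedUnder_ge.mono_ge hfg).isCoboundedUnder_le
  calc L = limsup f l := hf.limsup_eq.symm
    _ ≤ limsup (g ∘ s) l := limsup_le_limsup hfg hf.isCoboundedUnder_le hgs
    _ ≤ limsup g l' := hs.limsup_comp_le_limsup hcobdd hg

end Limits

theorem stmt_10_general {ι : Type*} {l : Filter ι} [l.NeBot] {α β : ℝ} {δ : ι → ℝ}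
    (hδ : Tendsto δ l (𝓝 0)) {n : ι → ℕ} (hn : Tendsto n l atTop) {a b : ι → ℤ}
    (ha : ∀ i, IsCoprime (a i) (Nat.fib (n i)))
    (hb : ∀ i, b i ≡ Nat.fib (n i - 1) * a i [ZMOD Nat.fib (n i)])
    (hα : ∀ i, |α - a i / Nat.fib (n i)| ≤ δ i / (Nat.fib (n i) : ℝ) ^ 2)
    (hβ : ∀ i, |β - b i / Nat.fib (n i)| ≤ δ i / (Nat.fib (n i) : ℝ) ^ 2) :
    2 / (3 + √5) ≤ limsup (fun Q : ℕ => (Q : ℝ) * minDistProd α β Q) atTop := by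
  have hbound : Tendsto (fun i => (1 - δ i) ^ 2 * (Nat.fib (n i - 2) / Nat.fib (n i) : ℝ)) l
      (𝓝 (2 / (3 + √5))) := by
    simpa [-Real.goldenConj_sq, goldenConj_sq_eq_two_div] using
      ((hδ.const_sub 1).pow 2).mul (tendsto_fib_sub_two_div_fib_atTop.comp hn)
  refine le_limsup_of_tendsto_of_eventually_le_comp
    (isBoundedUnder_of ⟨1, mul_minDistProd_le_one α β⟩) (tendsto_fib_atTop.comp hn) hbound ?_
  filter_upwards [hn.eventually_ge_atTop 3, hδ.eventually_le_const one_pos] with i hni hδi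
  exact fib_div_fib_le_fib_mul_minDistProd hni hδi (ha i) (hb i) (hα i) (hβ i)

/-- If `α, β` admit the special approximations by `a_ν/F_{n_ν}` and
`{F_{n_ν−1} a_ν / F_{n_ν}}` with errors `δ_ν/F_{n_ν}²`, `δ_ν → 0`, then
`limsup_{Q→∞} Q · (min_{1 ≤ x < Q} ‖αx‖·‖βx‖) ≥ 2/(3+√5)`. -/
theorem stmt_10 (α β : ℝ) (δ : ℕ → ℝ) (hδpos : ∀ ν, 0 < δ ν)
    (hδ : Filter.Tendsto δ Filter.atTop (nhds 0))
    (n : ℕ → ℕ) (hn : StrictMono n) (hnpos : ∀ ν, 0 < n ν)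
    (a : ℕ → ℕ) (ha : ∀ ν, 1 ≤ a ν ∧ a ν < Nat.fib (n ν))
    (hcop : ∀ ν, Nat.gcd (a ν) (Nat.fib (n ν)) = 1)
    (happrox : ∀ ν,
      |α - (a ν : ℝ) / (Nat.fib (n ν) : ℝ)| ≤ δ ν / (Nat.fib (n ν) : ℝ) ^ 2 ∧
      |β - Int.fract ((Nat.fib (n ν - 1) : ℝ) * (a ν : ℝ) / (Nat.fib (n ν) : ℝ))| ≤
        δ ν / (Nat.fib (n ν) : ℝ) ^ 2) :
    2 / (3 + Real.sqrt 5) ≤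
      Filter.limsup
        (fun Q : ℕ =>
          (Q : ℝ) *
            sInf {y : ℝ | ∃ x : ℕ, 1 ≤ x ∧ x < Q ∧
              y = distNearestInt (α * x) * distNearestInt (β * x)})
        Filter.atTop := by
  refine stmt_10_general hδ hn.tendsto_atTop (a := fun ν => a ν)
    (b := fun ν => (Nat.fib (n ν - 1) * a ν : ℤ) % Nat.fib (n ν))
    (fun ν => Nat.isCoprime_iff_coprime.mpr (hcop ν)) (fun ν => Int.mod_modEq _ _)
    (fun ν => by simpa using (happrox ν).1) (fun ν => ?_)
  rw [← Int.fract_div_intCast_eq_div_intCast_mod]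
  simpa using (happrox ν).2
end
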